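/- (Theorem 1, part 2) For every model M, world w and hybrid formula φ: I have a winning strategy for the semantic game G(M, (O, w : φ)) if and only if M, w ⊭ φ. -/

import Mathlib

/-- Hybrid logic formulas over nominals `ℕ` and propositional variables `ℕ`
(the two sorts are kept disjoint by the constructors). -/
inductive Form : Type where
  | prop : ℕ → Form
  | nom : ℕ → Form
  | rel : ℕ → ℕ → Form
  | and : Form → Form → Form
  | or : Form → Form → Form
  | imp : Form → Form → Form
  | neg : Form → Form
  | at_ : ℕ → Form → Form
  | box : Form → Form
  | dia : Form → Form

/-- A model for hybrid logic: a nonempty set of worlds, an accessibility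
relation, a valuation and an assignment of nominals to worlds. -/
structure Model where
  W : Type
  ne : Nonempty W
  R : W → W → Prop
  V : ℕ → W → Prop
  g : ℕ → W

/-- Satisfaction of a formula at a world of a model. -/
def sat (M : Model) : M.W → Form → Prop
  | w, .prop p => M.V p w
  | w, .nom i => M.g i = w
  | _, .rel i j => M.R (M.g i) (M.g j)
  | w, .and φ ψ => sat M w φ ∧ sat M w ψ
  | w, .or φ ψ => sat M w φ ∨ sat M w ψ
  | w, .imp φ ψ => ¬ sat M w φ ∨ sat M w ψ
  | w, .neg φ => ¬ sat M w φ
  | _, .at_ i φ => sat M (M.g i) φ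
  | w, .box φ => ∀ v, M.R w v → sat M v φ
  | w, .dia φ => ∃ v, M.R w v ∧ sat M v φ

/-- A model is named iff every world has a name, i.e. the assignment is surjective. -/
def Model.Named (M : Model) : Prop := Function.Surjective M.g

/-- A formula is valid iff it is true at every world of every model. -/
def Valid (φ : Form) : Prop := ∀ (M : Model) (w : M.W), sat M w φ

/-- Roles: `pro` means I am the proponent (`P`-state), `opp` that I am the opponent (`O`-state). -/
inductive Role : Type where
  | pro : Role
  | opp : Role

/-- Game states of the semantic game over a model: `loc r w φ` is the state
`Q, w : φ` and `glob r φ` is the state `Q : φ` (with `Q = P` for `r = pro`, `Q = O` for `r = opp`). -/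
inductive GState (M : Model) : Type where
  | loc : Role → M.W → Form → GState M
  | glob : Role → Form → GState M

/-- `IWins M s` holds iff I have a winning strategy for the semantic game `G(M, s)`:
a subtree of the game tree keeping exactly one child of every non-leaf node labelled "I"
(and all children of nodes labelled "Y"), all of whose leaves are labelled "I".
Each constructor corresponds to one game rule: at "I"-nodes I pick one child in which
I have a winning strategy; at "Y"-nodes I must have a winning strategy in every child;
leaves must be labelled "I". -/
inductive IWins (M : Model) : GState M → Prop where
  -- elementary leaves
  | proProp {w p} : M.V p w → IWins M (.loc .pro w (.prop p))
  | oppProp {w p} : ¬ M.V p w → IWins M (.loc .opp w (.prop p))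
  | proNom {w i} : M.g i = w → IWins M (.loc .pro w (.nom i))
  | oppNom {w i} : M.g i ≠ w → IWins M (.loc .opp w (.nom i))
  | proRel {w : M.W} {i j} : M.R (M.g i) (M.g j) → IWins M (.loc .pro w (.rel i j))
  | oppRel {w : M.W} {i j} : ¬ M.R (M.g i) (M.g j) → IWins M (.loc .opp w (.rel i j))
  -- disjunction
  | proOrL {w φ ψ} : IWins M (.loc .pro w φ) → IWins M (.loc .pro w (.or φ ψ))
  | proOrR {w φ ψ} : IWins M (.loc .pro w ψ) → IWins M (.loc .pro w (.or φ ψ))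
  | oppOr {w φ ψ} : IWins M (.loc .opp w φ) → IWins M (.loc .opp w ψ) →
      IWins M (.loc .opp w (.or φ ψ))
  -- conjunction
  | proAnd {w φ ψ} : IWins M (.loc .pro w φ) → IWins M (.loc .pro w ψ) →
      IWins M (.loc .pro w (.and φ ψ))
  | oppAndL {w φ ψ} : IWins M (.loc .opp w φ) → IWins M (.loc .opp w (.and φ ψ))
  | oppAndR {w φ ψ} : IWins M (.loc .opp w ψ) → IWins M (.loc .opp w (.and φ ψ))
  -- implication
  | proImpL {w φ ψ} : IWins M (.loc .opp w φ) → IWins M (.loc .pro w (.imp φ ψ))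
  | proImpR {w φ ψ} : IWins M (.loc .pro w ψ) → IWins M (.loc .pro w (.imp φ ψ))
  | oppImp {w φ ψ} : IWins M (.loc .pro w φ) → IWins M (.loc .opp w ψ) →
      IWins M (.loc .opp w (.imp φ ψ))
  -- negation (role switch)
  | proNeg {w φ} : IWins M (.loc .opp w φ) → IWins M (.loc .pro w (.neg φ))
  | oppNeg {w φ} : IWins M (.loc .pro w φ) → IWins M (.loc .opp w (.neg φ))
  -- @-operator
  | proAt {w i φ} : IWins M (.loc .pro (M.g i) φ) → IWins M (.loc .pro w (.at_ i φ))
  | oppAt {w i φ} : IWins M (.loc .opp (M.g i) φ) → IWins M (.loc .opp w (.at_ i φ))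
  -- box: for `P` a "Y"-node over all successors (a leaf labelled "I" if there are none);
  -- for `O` an "I"-node over all successors (a leaf labelled "Y" if there are none)
  | proBox {w φ} : (∀ v, M.R w v → IWins M (.loc .pro v φ)) → IWins M (.loc .pro w (.box φ))
  | oppBox {w φ} (v) : M.R w v → IWins M (.loc .opp v φ) → IWins M (.loc .opp w (.box φ))
  -- diamond: dual to box
  | proDia {w φ} (v) : M.R w v → IWins M (.loc .pro v φ) → IWins M (.loc .pro w (.dia φ))
  | oppDia {w φ} : (∀ v, M.R w v → IWins M (.loc .opp v φ)) → IWins M (.loc .opp w (.dia φ))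
  -- global states
  | proGlob {φ} : (∀ w, IWins M (.loc .pro w φ)) → IWins M (.glob .pro φ)
  | oppGlob {φ} (w) : IWins M (.loc .opp w φ) → IWins M (.glob .opp φ)

/- Read the `P`-state `w : φ` as the claim `M, w ⊨ φ` and the `O`-state as its negation. Each game
rule then becomes the truth clause of a connective or its De Morgan dual: an "I"-node holds iff some
child holds, a "Y"-node iff all children do. Hence I win from every state whose claim holds by
always moving to a child that holds, and conversely a winning strategy certifies the claim at its
root. -/

/-- The claim I defend in a game state: truth of the formula at the given world (or at every world)
if I am the proponent, its negation if I am the opponent. -/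
def GState.Holds {M : Model} : GState M → Prop
  | .loc .pro w φ => sat M w φ
  | .loc .opp w φ => ¬ sat M w φ
  | .glob .pro φ => ∀ w, sat M w φ
  | .glob .opp φ => ∃ w, ¬ sat M w φ

theorem IWins.holds {M : Model} {s : GState M} (h : IWins M s) : s.Holds := by
  induction h with
  | proProp h | oppProp h | proNom h | oppNom h | proRel h | oppRel h => exact h
  | proOrL _ hφ => exact Or.inl hφ
  | proOrR _ hψ => exact Or.inr hψ
  | oppOr _ _ hφ hψ => exact not_or.mpr ⟨hφ, hψ⟩
  | proAnd _ _ hφ hψ => exact ⟨hφ, hψ⟩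
  | oppAndL _ hφ => exact fun h => hφ h.1
  | oppAndR _ hψ => exact fun h => hψ h.2
  | proImpL _ hφ => exact Or.inl hφ
  | proImpR _ hψ => exact Or.inr hψ
  | oppImp _ _ hφ hψ => exact not_or.mpr ⟨not_not.mpr hφ, hψ⟩
  | proNeg _ hφ => exact hφ
  | oppNeg _ hφ => exact not_not.mpr hφ
  | proAt _ hφ | oppAt _ hφ => exact hφ
  | proBox _ hφ => exact hφ
  | oppBox v hwv _ hφ => exact fun h => hφ (h v hwv)
  | proDia v hwv _ hφ => exact ⟨v, hwv, hφ⟩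
  | oppDia _ hφ => exact fun ⟨v, hwv, h⟩ => hφ v hwv h
  | proGlob _ hφ => exact hφ
  | oppGlob w _ hφ => exact ⟨w, hφ⟩

mutual

theorem iWins_pro_of_sat {M : Model} (w : M.W) :
    ∀ φ : Form, sat M w φ → IWins M (.loc .pro w φ)
  | .prop _, h => .proProp h
  | .nom _, h => .proNom h
  | .rel _ _, h => .proRel h
  | .and φ ψ, h => .proAnd (iWins_pro_of_sat w φ h.1) (iWins_pro_of_sat w ψ h.2)
  | .or φ ψ, h =>
    h.elim (fun hφ => .proOrL (iWins_pro_of_sat w φ hφ))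
      (fun hψ => .proOrR (iWins_pro_of_sat w ψ hψ))
  | .imp φ ψ, h =>
    h.elim (fun hφ => .proImpL (iWins_opp_of_not_sat w φ hφ))
      (fun hψ => .proImpR (iWins_pro_of_sat w ψ hψ))
  | .neg φ, h => .proNeg (iWins_opp_of_not_sat w φ h)
  | .at_ i φ, h => .proAt (iWins_pro_of_sat (M.g i) φ h)
  | .box φ, h => .proBox fun v hwv => iWins_pro_of_sat v φ (h v hwv)
  | .dia φ, h =>
    have ⟨v, hwv, hφ⟩ := h
    .proDia v hwv (iWins_pro_of_sat v φ hφ)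

theorem iWins_opp_of_not_sat {M : Model} (w : M.W) :
    ∀ φ : Form, ¬ sat M w φ → IWins M (.loc .opp w φ)
  | .prop _, h => .oppProp h
  | .nom _, h => .oppNom h
  | .rel _ _, h => .oppRel h
  | .and φ ψ, h =>
    (not_and_or.mp h).elim (fun hφ => .oppAndL (iWins_opp_of_not_sat w φ hφ))
      (fun hψ => .oppAndR (iWins_opp_of_not_sat w ψ hψ))
  | .or φ ψ, h =>
    have ⟨hφ, hψ⟩ := not_or.mp h
    .oppOr (iWins_opp_of_not_sat w φ hφ) (iWins_opp_of_not_sat w ψ hψ)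
  | .imp φ ψ, h =>
    have ⟨hφ, hψ⟩ := not_or.mp h
    .oppImp (iWins_pro_of_sat w φ (not_not.mp hφ)) (iWins_opp_of_not_sat w ψ hψ)
  | .neg φ, h => .oppNeg (iWins_pro_of_sat w φ (not_not.mp h))
  | .at_ i φ, h => .oppAt (iWins_opp_of_not_sat (M.g i) φ h)
  | .box φ, h =>
    have ⟨v, hwv, hφ⟩ := not_forall₂.mp h
    .oppBox v hwv (iWins_opp_of_not_sat v φ hφ)
  | .dia φ, h => .oppDia fun v hwv => iWins_opp_of_not_sat v φ fun hφ => h ⟨v, hwv, hφ⟩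

end

theorem GState.Holds.iWins {M : Model} : ∀ {s : GState M}, s.Holds → IWins M s
  | .loc .pro w φ, h => iWins_pro_of_sat w φ h
  | .loc .opp w φ, h => iWins_opp_of_not_sat w φ h
  | .glob .pro φ, h => .proGlob fun w => iWins_pro_of_sat w φ (h w)
  | .glob .opp φ, h =>
    have ⟨w, hφ⟩ := h
    .oppGlob w (iWins_opp_of_not_sat w φ hφ)

theorem iWins_iff_holds {M : Model} (s : GState M) : IWins M s ↔ s.Holds :=
  ⟨IWins.holds, GState.Holds.iWins⟩

/-- (Theorem 1, part 2) I have a winning strategy for `G(M, (O, w : φ))` iff `M, w ⊭ φ`. -/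
theorem iWins_opp_iff_not_sat (M : Model) (w : M.W) (φ : Form) :
    IWins M (.loc .opp w φ) ↔ ¬ sat M w φ :=
  iWins_iff_holds (.loc .opp w φ)
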